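/- Let Λ ⊂ ℝ^n be a full-rank lattice, σ_s, σ_w > 0, α = σ_s²/(σ_s²+σ_w²) and σ_eff² = σ_s²σ_w²/(σ_s²+σ_w²). Let X ~ D_{Λ, σ_s} and W ~ N(0, σ_w² I_n) be independent, and let P_e(Λ) = Pr[(α−1)X + αW ∉ V(Λ)]. Then P_e(Λ) · f_{σ_s}(Λ) = ∫_{V(Λ)} f_{σ_eff}((Λ∖{0}) + w) · f_{√α·σ_s}(Λ + w) dw. -/

import Mathlib

open MeasureTheory Real Filter Pointwise
open scoped ENNReal RealInnerProductSpace

noncomputable section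

/-- The (continuous) Gaussian density with parameter `σ` on `ℝⁿ`:
`f_σ(x) = (2πσ²)^{-n/2} exp(-‖x‖²/(2σ²))`. -/
def gaussF (n : ℕ) (σ : ℝ) (x : EuclideanSpace ℝ (Fin n)) : ℝ :=
  (2 * π * σ ^ 2) ^ (-(n : ℝ) / 2) * Real.exp (-‖x‖ ^ 2 / (2 * σ ^ 2))

/-- The Gaussian mass `f_σ(S) = Σ_{y ∈ S} f_σ(y)` of a (countable) set `S ⊆ ℝⁿ`. -/
def gaussMass (n : ℕ) (σ : ℝ) (S : Set (EuclideanSpace ℝ (Fin n))) : ℝ :=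
  ∑' y : S, gaussF n σ y

/-- The Gaussian measure `N(0, σ² Iₙ)` on `ℝⁿ`, given by its density w.r.t. Lebesgue measure. -/
def gaussMeasure (n : ℕ) (σ : ℝ) : Measure (EuclideanSpace ℝ (Fin n)) :=
  volume.withDensity fun x => ENNReal.ofReal (gaussF n σ x)

/-- The coset `S + t` of a set `S ⊆ ℝⁿ`, i.e. `{x | x - t ∈ S}`. -/
def coset (n : ℕ) (S : Set (EuclideanSpace ℝ (Fin n))) (t : EuclideanSpace ℝ (Fin n)) :
    Set (EuclideanSpace ℝ (Fin n)) := {x | x - t ∈ S}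

/-- The Voronoi cell of `S`: `{x | ⟪x,y⟫ ≤ ‖y‖²/2 for all y ∈ S}`. -/
def voronoi (n : ℕ) (S : Set (EuclideanSpace ℝ (Fin n))) : Set (EuclideanSpace ℝ (Fin n)) :=
  {x | ∀ y ∈ S, ⟪x, y⟫ ≤ ‖y‖ ^ 2 / 2}

/-- The inverse error function `err⁻¹_ε(Λ)`: the least `s > 0` such that a standard Gaussian
leaves `s · V(Λ)` with probability at most `ε`. -/
def errInv (n : ℕ) (ε : ℝ) (S : Set (EuclideanSpace ℝ (Fin n))) : ℝ :=
  sInf {s : ℝ | 0 < s ∧ gaussMeasure n 1 ((s • voronoi n S)ᶜ) ≤ ENNReal.ofReal ε}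

/-- The Shannon entropy (in nats) of the discrete Gaussian `D_{S,σ}` supported on `S`,
which assigns mass `f_σ(y)/f_σ(S)` to each `y ∈ S`. -/
def dgEntropy (n : ℕ) (σ : ℝ) (S : Set (EuclideanSpace ℝ (Fin n))) : ℝ :=
  -∑' y : S, (gaussF n σ y / gaussMass n σ S) * Real.log (gaussF n σ y / gaussMass n σ S)

/-- The flatness factor `ε_Λ(σ) = sup_{x ∈ V(Λ)} |V(Λ)·f_σ(Λ+x) − 1|`. -/
def flatness (n : ℕ) (L : Submodule ℤ (EuclideanSpace ℝ (Fin n))) (σ : ℝ) : ℝ :=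
  ⨆ x : voronoi n (L : Set (EuclideanSpace ℝ (Fin n))),
    |ZLattice.covolume L volume *
        gaussMass n σ (coset n (L : Set (EuclideanSpace ℝ (Fin n))) x) - 1|

/-!
Completing the square gives
`f_σs(x) f_σw(w) = f_σeff(α(x + w) - x) · f_√(σs² + σw²)(x + w)`, so substituting
`z = (α - 1)x + αw` turns the term of `x` in `Pe · f_σs(Λ)` into
`∫_{z ∉ V(Λ)} f_σeff(z) f_{√α σs}(x + z) dz`. Summed over `x ∈ Λ`, the second factor is
`Λ`-periodic. Up to null sets the complement of a fundamental domain is the disjoint union of its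
nonzero translates, so the integral unfolds to the domain, where the periodic factor comes out of
the sum over translates. The cell `V(Λ)` is a fundamental domain: subtracting from `x` a nearest
lattice point moves it into `V(Λ)`, and two translates of `V(Λ)` overlap only inside a hyperplane.
-/

lemma toReal_tsum_ofReal {ι : Type*} {f : ι → ℝ} (hf : ∀ i, 0 ≤ f i) :
    (∑' i, ENNReal.ofReal (f i)).toReal = ∑' i, f i := by
  simp only [ENNReal.tsum_toReal_eq fun _ => ENNReal.ofReal_ne_top, ENNReal.toReal_ofReal (hf _)]

section FundamentalDomain

variable {G X : Type*} [AddGroup G] [AddAction G X] [MeasurableSpace X] [MeasurableConstVAdd G X]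
  {μ : Measure X} [VAddInvariantMeasure G X μ] {D : Set X}

lemma aemeasurable_comp_const_vadd {F : X → ℝ≥0∞} (hF : AEMeasurable F μ) (g : G) :
    AEMeasurable (fun w => F (g +ᵥ w)) μ :=
  hF.comp_quasiMeasurePreserving (measurePreserving_vadd g μ).quasiMeasurePreserving

variable [Countable G]

lemma restrict_compl_fundamentalDomain (hD : IsAddFundamentalDomain G D μ) :
    μ.restrict Dᶜ = Measure.sum fun g : {g : G // g ≠ 0} => μ.restrict ((g : G) +ᵥ D) := by
  have hcompl : (Dᶜ : Set X) =ᵐ[μ] (⋃ g : {g : G // g ≠ 0}, (g : G) +ᵥ D : Set X) := by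
    have hdisj : ∀ᵐ z ∂μ, ∀ g : {g : G // g ≠ 0}, z ∉ ((g : G) +ᵥ D) ∩ D :=
      ae_all_iff.2 fun g => measure_eq_zero_iff_ae_notMem.1 <| by
        simpa only [Function.onFun, AEDisjoint, zero_vadd] using hD.aedisjoint g.2
    filter_upwards [hdisj, hD.iUnion_vadd_ae_eq.mem_iff] with z hz hcover
    obtain ⟨g, hg⟩ := Set.mem_iUnion.1 (hcover.2 trivial)
    refine propext ⟨fun hzD => Set.mem_iUnion.2 ⟨⟨g, ?_⟩, hg⟩, fun hz' hzD => ?_⟩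
    · rintro rfl
      exact hzD (by rwa [zero_vadd] at hg)
    · obtain ⟨g', hg'⟩ := Set.mem_iUnion.1 hz'
      exact hz g' ⟨hg', hzD⟩
  have hpairwise :
      Pairwise (Function.onFun (AEDisjoint μ) fun g : {g : G // g ≠ 0} => (g : G) +ᵥ D) :=
    hD.aedisjoint.comp_of_injective Subtype.coe_injective
  rw [Measure.restrict_congr_set hcompl,
    Measure.restrict_iUnion_ae hpairwise fun g => hD.nullMeasurableSet_vadd g]

lemma lintegral_compl_fundamentalDomain (hD : IsAddFundamentalDomain G D μ) (F : X → ℝ≥0∞) :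
    ∫⁻ z in Dᶜ, F z ∂μ = ∑' g : {g : G // g ≠ 0}, ∫⁻ w in D, F ((g : G) +ᵥ w) ∂μ := by
  rw [restrict_compl_fundamentalDomain hD, lintegral_sum_measure]
  exact tsum_congr fun g => (measurePreserving_vadd (g : G) μ).setLIntegral_comp_emb
    (measurableEmbedding_const_vadd _) F D |>.symm

lemma ae_tsum_vadd_ne_top (hD : IsAddFundamentalDomain G D μ) {F : X → ℝ≥0∞}
    (hF : AEMeasurable F μ) (hF_top : ∫⁻ z, F z ∂μ ≠ ∞) :
    ∀ᵐ w ∂μ.restrict D, ∑' g : G, F (g +ᵥ w) ≠ ∞ := by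
  have hF' := fun g : G => (aemeasurable_comp_const_vadd hF g).restrict (s := D)
  rw [hD.lintegral_eq_tsum'', ← lintegral_tsum hF'] at hF_top
  exact (ae_lt_top' (AEMeasurable.tsum hF') hF_top).mono fun _ => LT.lt.ne

lemma tsum_lintegral_compl_mul_vadd (hD : IsAddFundamentalDomain G D μ) {φ ψ : X → ℝ≥0∞}
    (hφ : AEMeasurable φ μ) (hψ : AEMeasurable ψ μ) :
    ∑' g : G, ∫⁻ z in Dᶜ, φ z * ψ (g +ᵥ z) ∂μ =
      ∫⁻ w in D, (∑' g : {g : G // g ≠ 0}, φ ((g : G) +ᵥ w)) * ∑' g : G, ψ (g +ᵥ w) ∂μ := by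
  have hperiodic : ∀ (h : G) (w : X), ∑' g : G, ψ (g +ᵥ h +ᵥ w) = ∑' g : G, ψ (g +ᵥ w) :=
    fun h w => by
      simpa only [Equiv.coe_addRight, add_vadd] using
        (Equiv.addRight h).tsum_eq fun g => ψ (g +ᵥ w)
  have hψ_sum : AEMeasurable (fun w => ∑' g : G, ψ (g +ᵥ w)) μ :=
    AEMeasurable.tsum fun g => aemeasurable_comp_const_vadd hψ g
  calc ∑' g : G, ∫⁻ z in Dᶜ, φ z * ψ (g +ᵥ z) ∂μ
      = ∫⁻ z in Dᶜ, φ z * ∑' g : G, ψ (g +ᵥ z) ∂μ := by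
        simp_rw [← ENNReal.tsum_mul_left]
        exact (lintegral_tsum fun g => (hφ.mul (aemeasurable_comp_const_vadd hψ g)).restrict).symm
    _ = ∑' h : {g : G // g ≠ 0},
          ∫⁻ w in D, φ ((h : G) +ᵥ w) * ∑' g : G, ψ (g +ᵥ w) ∂μ := by
        simp_rw [lintegral_compl_fundamentalDomain hD, hperiodic]
    _ = _ := by
        simp_rw [← ENNReal.tsum_mul_right]
        exact (lintegral_tsum fun h =>
          ((aemeasurable_comp_const_vadd hφ _).mul hψ_sum).restrict).symm

lemma tsum_setIntegral_compl_mul_vadd (hD : IsAddFundamentalDomain G D μ) {φ ψ : X → ℝ}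
    (hφ_nonneg : 0 ≤ φ) (hψ_nonneg : 0 ≤ ψ) (hφ : Integrable φ μ) (hψ : Integrable ψ μ)
    (hφψ : ∀ g : G, IntegrableOn (fun z => φ z * ψ (g +ᵥ z)) Dᶜ μ) :
    ∑' g : G, ∫ z in Dᶜ, φ z * ψ (g +ᵥ z) ∂μ =
      ∫ w in D, (∑' g : {g : G // g ≠ 0}, φ ((g : G) +ᵥ w)) * ∑' g : G, ψ (g +ᵥ w) ∂μ := by
  have hφ' := hφ.aemeasurable.ennreal_ofReal
  have hψ' := hψ.aemeasurable.ennreal_ofReal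
  have hφ_top := ae_tsum_vadd_ne_top hD hφ' hφ.lintegral_lt_top.ne
  have hψ_top := ae_tsum_vadd_ne_top hD hψ' hψ.lintegral_lt_top.ne
  have setIntegral_eq_toReal : ∀ g : G, ∫ z in Dᶜ, φ z * ψ (g +ᵥ z) ∂μ =
      (∫⁻ z in Dᶜ, ENNReal.ofReal (φ z) * ENNReal.ofReal (ψ (g +ᵥ z)) ∂μ).toReal := fun g => by
    simp_rw [← ENNReal.ofReal_mul (hφ_nonneg _)]
    exact integral_eq_lintegral_of_nonneg_ae
      (ae_of_all _ fun z => mul_nonneg (hφ_nonneg z) (hψ_nonneg _)) (hφψ g).1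
  have setLIntegral_ne_top : ∀ g : G,
      ∫⁻ z in Dᶜ, ENNReal.ofReal (φ z) * ENNReal.ofReal (ψ (g +ᵥ z)) ∂μ ≠ ∞ := fun g => by
    simp_rw [← ENNReal.ofReal_mul (hφ_nonneg _)]
    exact (hφψ g).lintegral_lt_top.ne
  simp_rw [setIntegral_eq_toReal]
  rw [← ENNReal.tsum_toReal_eq setLIntegral_ne_top, tsum_lintegral_compl_mul_vadd hD hφ' hψ',
    ← integral_toReal]
  · simp_rw [ENNReal.toReal_mul, toReal_tsum_ofReal fun _ => hφ_nonneg _,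
      toReal_tsum_ofReal fun _ => hψ_nonneg _]
  · exact ((AEMeasurable.tsum fun g : {g : G // g ≠ 0} =>
      aemeasurable_comp_const_vadd hφ' (g : G)).mul
        (AEMeasurable.tsum fun g => aemeasurable_comp_const_vadd hψ' g)).restrict
  · filter_upwards [hφ_top, hψ_top] with w hφw hψw
    exact (ENNReal.mul_ne_top (ne_top_of_le_ne_top hφw
      (ENNReal.tsum_comp_le_tsum_of_injective Subtype.coe_injective _)) hψw).lt_top

end FundamentalDomain

section ChangeOfVariables

variable {E F : Type*} [NormedAddCommGroup E] [NormedSpace ℝ E] [FiniteDimensional ℝ E]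
  [MeasurableSpace E] [BorelSpace E] (μ : Measure E) [μ.IsAddHaarMeasure]
  [NormedAddCommGroup F] [NormedSpace ℝ F]

lemma setIntegral_comp_add_smul {a : ℝ} (ha : a ≠ 0) (c : E) (s : Set E) (f : E → F) :
    ∫ w in {w | c + a • w ∈ s}, f (c + a • w) ∂μ =
      |(a ^ Module.finrank ℝ E)⁻¹| • ∫ z in s, f z ∂μ := by
  calc ∫ w in {w | c + a • w ∈ s}, f (c + a • w) ∂μ
      = ∫ z in {z | c + z ∈ s}, f (c + z) ∂μ.map (a • ·) :=
        ((measurableEmbedding_const_smul₀ ha).setIntegral_map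
          (fun z => f (c + z)) {z | c + z ∈ s}).symm
    _ = |(a ^ Module.finrank ℝ E)⁻¹| • ∫ z in {z | c + z ∈ s}, f (c + z) ∂μ := by
        rw [Measure.map_addHaar_smul μ ha, Measure.restrict_smul, integral_smul_measure,
          ENNReal.toReal_ofReal (abs_nonneg _)]
    _ = |(a ^ Module.finrank ℝ E)⁻¹| • ∫ z in s, f z ∂μ := by
        congr 1
        exact (measurePreserving_add_left μ c).setIntegral_preimage_emb
          (measurableEmbedding_addLeft c) f s

end ChangeOfVariables

section Gaussian

variable {n : ℕ} {σ τ : ℝ}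

lemma gaussF_nonneg (x : EuclideanSpace ℝ (Fin n)) : 0 ≤ gaussF n σ x := by
  unfold gaussF
  positivity

lemma gaussF_pos (hσ : σ ≠ 0) (x : EuclideanSpace ℝ (Fin n)) : 0 < gaussF n σ x := by
  unfold gaussF
  positivity

@[fun_prop]
lemma continuous_gaussF : Continuous (gaussF n σ) := by
  unfold gaussF
  fun_prop

lemma gaussF_le (x : EuclideanSpace ℝ (Fin n)) :
    gaussF n σ x ≤ (2 * π * σ ^ 2) ^ (-(n : ℝ) / 2) := by
  refine mul_le_of_le_one_right (by positivity) (Real.exp_le_one_iff.2 ?_)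
  rw [neg_div]
  exact neg_nonpos.2 (by positivity)

lemma integrable_gaussF (hσ : σ ≠ 0) : Integrable (gaussF n σ) := by
  have hexp : Integrable fun x : EuclideanSpace ℝ (Fin n) =>
      Real.exp (-(2 * σ ^ 2)⁻¹ * ‖x‖ ^ 2) := by
    refine .of_integral_ne_zero ?_
    rw [GaussianFourier.integral_rexp_neg_mul_sq_norm (by positivity)]
    positivity
  refine (hexp.const_mul ((2 * π * σ ^ 2) ^ (-(n : ℝ) / 2))).congr (ae_of_all _ fun x => ?_)
  simp only [gaussF]
  ring_nf

lemma integrable_gaussF_mul_gaussF_add (hσ : σ ≠ 0) (y : EuclideanSpace ℝ (Fin n)) :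
    Integrable fun x => gaussF n σ x * gaussF n τ (y + x) := by
  refine (integrable_gaussF hσ).mul_bdd (c := (2 * π * τ ^ 2) ^ (-(n : ℝ) / 2))
    (Continuous.aestronglyMeasurable (by fun_prop)) (ae_of_all _ fun x => ?_)
  rw [Real.norm_of_nonneg (gaussF_nonneg _)]
  exact gaussF_le _

lemma exists_gaussF_le_inv_pow (hσ : σ ≠ 0) (m : ℕ) :
    ∃ C, ∀ x : EuclideanSpace ℝ (Fin n), x ≠ 0 → gaussF n σ x ≤ C * ‖x‖⁻¹ ^ (2 * m) := by
  refine ⟨(2 * π * σ ^ 2) ^ (-(n : ℝ) / 2) * (m.factorial * (2 * σ ^ 2) ^ m), fun x hx => ?_⟩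
  have hexp : Real.exp (-‖x‖ ^ 2 / (2 * σ ^ 2)) ≤
      m.factorial * (2 * σ ^ 2) ^ m * ‖x‖⁻¹ ^ (2 * m) := by
    calc Real.exp (-‖x‖ ^ 2 / (2 * σ ^ 2))
        = (Real.exp (‖x‖ ^ 2 / (2 * σ ^ 2)))⁻¹ := by rw [neg_div, Real.exp_neg]
      _ ≤ ((‖x‖ ^ 2 / (2 * σ ^ 2)) ^ m / m.factorial)⁻¹ :=
          inv_anti₀ (by positivity) (Real.pow_div_factorial_le_exp _ (by positivity) m)
      _ = m.factorial * (2 * σ ^ 2) ^ m * ‖x‖⁻¹ ^ (2 * m) := by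
          rw [div_pow, ← pow_mul, inv_pow]
          field_simp
  rw [gaussF, mul_assoc _ _ (‖x‖⁻¹ ^ (2 * m))]
  gcongr

lemma summable_gaussF (L : Submodule ℤ (EuclideanSpace ℝ (Fin n))) [DiscreteTopology L]
    (hσ : σ ≠ 0) : Summable fun x : L => gaussF n σ x := by
  have hinv_pow : Summable fun x : L => ‖x‖⁻¹ ^ (2 * (Module.finrank ℤ L + 1)) :=
    ZLattice.summable_norm_pow_inv L _ (by lia)
  obtain ⟨C, hC⟩ := exists_gaussF_le_inv_pow (n := n) hσ (Module.finrank ℤ L + 1)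
  refine .of_norm_bounded_eventually (hinv_pow.mul_left C) ?_
  filter_upwards [(Set.finite_singleton (0 : L)).compl_mem_cofinite] with x hx
  rw [Real.norm_of_nonneg (gaussF_nonneg _)]
  exact hC x (by simpa using hx)

lemma gaussMass_submodule_pos (L : Submodule ℤ (EuclideanSpace ℝ (Fin n))) [DiscreteTopology L]
    (hσ : σ ≠ 0) : 0 < gaussMass n σ L :=
  (summable_gaussF L hσ).tsum_pos (fun _ => gaussF_nonneg _) 0 (gaussF_pos hσ _)

lemma gaussMass_coset_range {ι : Type*} {v : ι → EuclideanSpace ℝ (Fin n)}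
    (hv : Function.Injective v) (t : EuclideanSpace ℝ (Fin n)) :
    gaussMass n σ (coset n (Set.range v) t) = ∑' i, gaussF n σ (v i + t) := by
  have hcoset : coset n (Set.range v) t = Set.range fun i => v i + t := by
    ext x
    simp only [coset, Set.mem_ofPred_eq, Set.mem_range, eq_sub_iff_add_eq]
  rw [hcoset]
  exact tsum_range (gaussF n σ) ((add_left_injective t).comp hv)

lemma gaussMass_coset_submodule (L : Submodule ℤ (EuclideanSpace ℝ (Fin n)))
    (t : EuclideanSpace ℝ (Fin n)) :
    gaussMass n σ (coset n L t) = ∑' l : L, gaussF n σ (l + t) := by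
  conv_lhs => rw [← Subtype.range_coe (s := (L : Set (EuclideanSpace ℝ (Fin n))))]
  exact gaussMass_coset_range Subtype.coe_injective t

lemma gaussMass_coset_submodule_diff_zero (L : Submodule ℤ (EuclideanSpace ℝ (Fin n)))
    (t : EuclideanSpace ℝ (Fin n)) :
    gaussMass n σ (coset n ((L : Set (EuclideanSpace ℝ (Fin n))) \ {0}) t) =
      ∑' l : {l : L // l ≠ 0}, gaussF n σ (l + t) := by
  have hrange : (L : Set (EuclideanSpace ℝ (Fin n))) \ {0} =
      Set.range fun l : {l : L // l ≠ 0} => ((l : L) : EuclideanSpace ℝ (Fin n)) := by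
    ext x
    simp [and_comm]
  rw [hrange]
  exact gaussMass_coset_range (Subtype.coe_injective.comp Subtype.coe_injective) t

lemma gaussF_smul {a : ℝ} (ha : a ≠ 0) (x : EuclideanSpace ℝ (Fin n)) :
    |a| ^ n * gaussF n (a * σ) (a • x) = gaussF n σ x := by
  have hconst : |a| ^ n * (2 * π * (a * σ) ^ 2) ^ (-(n : ℝ) / 2) =
      (2 * π * σ ^ 2) ^ (-(n : ℝ) / 2) := by
    have ha_rpow : (a ^ 2) ^ (-(n : ℝ) / 2) = (|a| ^ n)⁻¹ := by
      rw [← sq_abs, ← Real.rpow_natCast, ← Real.rpow_mul (abs_nonneg a), Nat.cast_ofNat,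
        mul_div_cancel₀ _ two_ne_zero, Real.rpow_neg (abs_nonneg a), Real.rpow_natCast]
    rw [mul_pow, mul_left_comm, Real.mul_rpow (by positivity) (by positivity), ha_rpow,
      mul_inv_cancel_left₀ (by positivity)]
  have hexp : -‖a • x‖ ^ 2 / (2 * (a * σ) ^ 2) = -‖x‖ ^ 2 / (2 * σ ^ 2) := by
    rw [norm_smul, mul_pow, mul_pow, Real.norm_eq_abs, sq_abs, ← mul_neg, mul_left_comm,
      mul_div_mul_left _ _ (pow_ne_zero 2 ha)]
  rw [gaussF, gaussF, hexp, ← mul_assoc, hconst]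

lemma gaussF_mul_gaussF (hσ : σ ≠ 0) (hτ : τ ≠ 0) (x w : EuclideanSpace ℝ (Fin n)) :
    gaussF n σ x * gaussF n τ w =
      gaussF n √(σ ^ 2 * τ ^ 2 / (σ ^ 2 + τ ^ 2)) ((σ ^ 2 / (σ ^ 2 + τ ^ 2)) • (x + w) - x) *
        gaussF n √(σ ^ 2 + τ ^ 2) (x + w) := by
  have hconst : (2 * π * σ ^ 2) ^ (-(n : ℝ) / 2) * (2 * π * τ ^ 2) ^ (-(n : ℝ) / 2) =
      (2 * π * (σ ^ 2 * τ ^ 2 / (σ ^ 2 + τ ^ 2))) ^ (-(n : ℝ) / 2) *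
        (2 * π * (σ ^ 2 + τ ^ 2)) ^ (-(n : ℝ) / 2) := by
    rw [← Real.mul_rpow (by positivity) (by positivity),
      ← Real.mul_rpow (by positivity) (by positivity)]
    congr 1
    field_simp
  have hexp : -‖x‖ ^ 2 / (2 * σ ^ 2) + -‖w‖ ^ 2 / (2 * τ ^ 2) =
      -‖(σ ^ 2 / (σ ^ 2 + τ ^ 2)) • (x + w) - x‖ ^ 2 / (2 * (σ ^ 2 * τ ^ 2 / (σ ^ 2 + τ ^ 2))) +
        -‖x + w‖ ^ 2 / (2 * (σ ^ 2 + τ ^ 2)) := by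
    rw [norm_sub_sq_real, norm_smul, mul_pow, Real.norm_eq_abs, sq_abs, real_inner_smul_left,
      inner_add_left, real_inner_self_eq_norm_sq, norm_add_sq_real, real_inner_comm]
    field_simp
    ring
  simp only [gaussF, Real.sq_sqrt (show 0 ≤ σ ^ 2 + τ ^ 2 by positivity),
    Real.sq_sqrt (show 0 ≤ σ ^ 2 * τ ^ 2 / (σ ^ 2 + τ ^ 2) by positivity)]
  rw [mul_mul_mul_comm, ← Real.exp_add, hconst, hexp, Real.exp_add, mul_mul_mul_comm]

lemma gaussF_mul_setIntegral_gaussF (hσ : 0 < σ) (hτ : 0 < τ) (D : Set (EuclideanSpace ℝ (Fin n)))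
    (x : EuclideanSpace ℝ (Fin n)) {α : ℝ} (hα : α = σ ^ 2 / (σ ^ 2 + τ ^ 2)) :
    gaussF n σ x * ∫ w in {w | (α - 1) • x + α • w ∉ D}, gaussF n τ w =
      ∫ z in Dᶜ, gaussF n √(σ ^ 2 * τ ^ 2 / (σ ^ 2 + τ ^ 2)) z * gaussF n (√α * σ) (x + z) := by
  have hα_pos : 0 < α := by rw [hα]; positivity
  have hwidth : √α * σ = α * √(σ ^ 2 + τ ^ 2) := by
    rw [hα, ← sq_eq_sq₀ (by positivity) (by positivity), mul_pow, mul_pow,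
      Real.sq_sqrt (by positivity), Real.sq_sqrt (by positivity)]
    field_simp
  have hprod : ∀ w, gaussF n σ x * gaussF n τ w = α ^ n *
      (gaussF n √(σ ^ 2 * τ ^ 2 / (σ ^ 2 + τ ^ 2)) ((α - 1) • x + α • w) *
        gaussF n (√α * σ) (x + ((α - 1) • x + α • w))) := fun w => by
    rw [gaussF_mul_gaussF hσ.ne' hτ.ne', ← gaussF_smul hα_pos.ne' (x + w), abs_of_pos hα_pos,
      ← hα, hwidth, show (α - 1) • x + α • w = α • (x + w) - x by module, add_sub_cancel]
    ring
  rw [← integral_const_mul]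
  simp_rw [hprod]
  rw [integral_const_mul]
  have hchange := setIntegral_comp_add_smul volume hα_pos.ne' ((α - 1) • x) Dᶜ fun z =>
    gaussF n √(σ ^ 2 * τ ^ 2 / (σ ^ 2 + τ ^ 2)) z * gaussF n (√α * σ) (x + z)
  simp only [Set.mem_compl_iff] at hchange
  rw [hchange, finrank_euclideanSpace_fin, abs_of_pos (by positivity), smul_eq_mul,
    mul_inv_cancel_left₀ (by positivity)]

end Gaussian

section Voronoi

lemma measure_inner_eq_const {E : Type*} [NormedAddCommGroup E] [InnerProductSpace ℝ E]
    [FiniteDimensional ℝ E] [MeasurableSpace E] [BorelSpace E] (μ : Measure E)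
    [μ.IsAddHaarMeasure] {y : E} (hy : y ≠ 0) (c : ℝ) : μ {x | ⟪x, y⟫ = c} = 0 := by
  have hlevel : {x | ⟪x, y⟫ = c} = (· + -((c / ‖y‖ ^ 2) • y)) ⁻¹' (ℝ ∙ y)ᗮ := by
    ext x
    have hy_norm : ‖y‖ ≠ 0 := norm_ne_zero_iff.2 hy
    simp only [Set.mem_ofPred_eq, Set.mem_preimage, SetLike.mem_coe,
      Submodule.mem_orthogonal_singleton_iff_inner_left, inner_add_left, inner_neg_left,
      real_inner_smul_left, real_inner_self_eq_norm_sq]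
    rw [div_mul_cancel₀ _ (pow_ne_zero 2 hy_norm), ← sub_eq_add_neg, sub_eq_zero]
  rw [hlevel, measure_preimage_add_right]
  refine Measure.addHaar_submodule μ _ fun htop => hy ?_
  simpa using htop

variable {n : ℕ}

lemma mem_voronoi_iff_norm_le {S : Set (EuclideanSpace ℝ (Fin n))}
    {x : EuclideanSpace ℝ (Fin n)} :
    x ∈ voronoi n S ↔ ∀ y ∈ S, ‖x‖ ≤ ‖x - y‖ := by
  refine forall₂_congr fun y _ => ?_
  rw [← sq_le_sq₀ (norm_nonneg _) (norm_nonneg _), norm_sub_sq_real]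
  constructor <;> intro h <;> linarith

lemma isClosed_voronoi (S : Set (EuclideanSpace ℝ (Fin n))) : IsClosed (voronoi n S) := by
  simp only [voronoi, Set.ofPred_forall]
  exact isClosed_biInter fun y _ => isClosed_le (by fun_prop) continuous_const

lemma inner_eq_of_mem_voronoi_of_add_mem_voronoi {L : Submodule ℤ (EuclideanSpace ℝ (Fin n))}
    {l w : EuclideanSpace ℝ (Fin n)} (hl : l ∈ L) (hw : w ∈ voronoi n L)
    (hlw : l + w ∈ voronoi n L) : ⟪l + w, l⟫ = ‖l‖ ^ 2 / 2 := by
  have hle := hlw l hl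
  have hge := hw (-l) (neg_mem hl)
  rw [inner_neg_right, norm_neg] at hge
  rw [inner_add_left, real_inner_self_eq_norm_sq] at hle ⊢
  linarith

variable (L : Submodule ℤ (EuclideanSpace ℝ (Fin n))) [DiscreteTopology L]

lemma exists_add_mem_voronoi (x : EuclideanSpace ℝ (Fin n)) :
    ∃ l : L, (l : EuclideanSpace ℝ (Fin n)) + x ∈ voronoi n L := by
  have : DiscreteTopology L.toAddSubgroup := ‹DiscreteTopology L›
  have hclosed : IsClosed (L : Set (EuclideanSpace ℝ (Fin n))) :=
    L.toAddSubgroup.isClosed_of_discrete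
  obtain ⟨p, hp, hdist⟩ := hclosed.exists_infDist_eq_dist ⟨0, L.zero_mem⟩ x
  refine ⟨⟨-p, neg_mem hp⟩, mem_voronoi_iff_norm_le.2 fun y hy => ?_⟩
  calc ‖-p + x‖ = dist x p := by rw [neg_add_eq_sub, dist_eq_norm]
    _ ≤ dist x (p + y) := hdist ▸ Metric.infDist_le_dist_of_mem (L.add_mem hp hy)
    _ = ‖-p + x - y‖ := by rw [dist_eq_norm, neg_add_eq_sub, sub_sub]

lemma isAddFundamentalDomain_voronoi : IsAddFundamentalDomain L (voronoi n L) volume := by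
  refine .mk'' (isClosed_voronoi _).measurableSet.nullMeasurableSet
    (ae_of_all _ (exists_add_mem_voronoi L)) (fun l hl => ?_) fun l =>
      (measurePreserving_add_left volume (l : EuclideanSpace ℝ (Fin n))).quasiMeasurePreserving
  refine measure_mono_null ?_ (measure_inner_eq_const volume
    (y := (l : EuclideanSpace ℝ (Fin n))) (by simpa using hl) (‖l‖ ^ 2 / 2))
  rintro _ ⟨⟨w, hw, rfl⟩, hlw⟩
  exact inner_eq_of_mem_voronoi_of_add_mem_voronoi l.2 hw hlw

end Voronoi

theorem error_probability_integral_identity_general (n : ℕ)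
    (L : Submodule ℤ (EuclideanSpace ℝ (Fin n))) [DiscreteTopology L]
    (D : Set (EuclideanSpace ℝ (Fin n))) (hD : IsAddFundamentalDomain L D)
    (σs σw : ℝ) (hσs : 0 < σs) (hσw : 0 < σw) (α σeff : ℝ)
    (hα : α = σs ^ 2 / (σs ^ 2 + σw ^ 2))
    (hσeff : σeff = √(σs ^ 2 * σw ^ 2 / (σs ^ 2 + σw ^ 2)))
    (Pe : ℝ)
    (hPe : Pe = ∑' x : (L : Set (EuclideanSpace ℝ (Fin n))), (gaussF n σs x / gaussMass n σs L) *
      ∫ w in {w | (α - 1) • (x : EuclideanSpace ℝ (Fin n)) + α • w ∉ D}, gaussF n σw w) :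
    Pe * gaussMass n σs L =
      ∫ w in D, gaussMass n σeff (coset n ((L : Set (EuclideanSpace ℝ (Fin n))) \ {0}) w) *
        gaussMass n (√α * σs) (coset n L w) := by
  have : VAddInvariantMeasure L (EuclideanSpace ℝ (Fin n)) volume :=
    inferInstanceAs (VAddInvariantMeasure L.toAddSubgroup _ _)
  have : Countable L := countable_of_Lindelof_of_discrete
  have hσeff_ne : σeff ≠ 0 := by rw [hσeff]; positivity
  have hα_pos : 0 < α := by rw [hα]; positivity
  have hmass_ne : gaussMass n σs L ≠ 0 := (gaussMass_submodule_pos L hσs.ne').ne'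
  calc Pe * gaussMass n σs L
      = ∑' x : L, gaussF n σs x *
          ∫ w in {w | (α - 1) • (x : EuclideanSpace ℝ (Fin n)) + α • w ∉ D}, gaussF n σw w := by
        rw [hPe, ← tsum_mul_right]
        exact tsum_congr fun x => by field_simp
    _ = ∑' x : L, ∫ z in Dᶜ, gaussF n σeff z * gaussF n (√α * σs) (x +ᵥ z) :=
        tsum_congr fun x => hσeff ▸ gaussF_mul_setIntegral_gaussF hσs hσw D x hα
    _ = ∫ w in D, (∑' l : {l : L // l ≠ 0}, gaussF n σeff ((l : L) +ᵥ w)) *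
          ∑' l : L, gaussF n (√α * σs) (l +ᵥ w) :=
        tsum_setIntegral_compl_mul_vadd hD (fun _ => gaussF_nonneg _)
          (fun _ => gaussF_nonneg _) (integrable_gaussF hσeff_ne)
          (integrable_gaussF (by positivity)) fun l =>
            (integrable_gaussF_mul_gaussF_add hσeff_ne _).integrableOn
    _ = ∫ w in D, gaussMass n σeff (coset n ((L : Set (EuclideanSpace ℝ (Fin n))) \ {0}) w) *
          gaussMass n (√α * σs) (coset n L w) := by
        simp only [gaussMass_coset_submodule, gaussMass_coset_submodule_diff_zero,
          Submodule.vadd_def, vadd_eq_add]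

/-- the MAP error probability satisfies
`P_e(Λ)·f_{σ_s}(Λ) = ∫_{V(Λ)} f_{σ_eff}((Λ∖{0})+w)·f_{√α·σ_s}(Λ+w) dw`. -/
theorem error_probability_integral_identity (n : ℕ) (L : Submodule ℤ (EuclideanSpace ℝ (Fin n)))
    [DiscreteTopology L] [IsZLattice ℝ L]
    (σs σw : ℝ) (hσs : 0 < σs) (hσw : 0 < σw)
    (α σeff : ℝ)
    (hα : α = σs ^ 2 / (σs ^ 2 + σw ^ 2))
    (hσeff : σeff = Real.sqrt (σs ^ 2 * σw ^ 2 / (σs ^ 2 + σw ^ 2)))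
    (Pe : ℝ)
    (hPe : Pe = ∑' x : (L : Set (EuclideanSpace ℝ (Fin n))),
        (gaussF n σs x / gaussMass n σs (L : Set (EuclideanSpace ℝ (Fin n)))) *
          ∫ w in {w : EuclideanSpace ℝ (Fin n) |
              (α - 1) • (x : EuclideanSpace ℝ (Fin n)) + α • w ∉ voronoi n (L : Set (EuclideanSpace ℝ (Fin n)))},
            gaussF n σw w) :
    Pe * gaussMass n σs (L : Set (EuclideanSpace ℝ (Fin n))) =
      ∫ w in voronoi n (L : Set (EuclideanSpace ℝ (Fin n))),
        gaussMass n σeff (coset n ((L : Set (EuclideanSpace ℝ (Fin n))) \ {0}) w) *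
          gaussMass n (Real.sqrt α * σs) (coset n (L : Set (EuclideanSpace ℝ (Fin n))) w) :=
  error_probability_integral_identity_general n L _ (isAddFundamentalDomain_voronoi L)
    σs σw hσs hσw α σeff hα hσeff Pe hPe
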